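/- arXiv:1806.04566 — 2 statements merged into one kernel-verified Lean document; each statement's English description precedes it below -/
import Mathlib

section
/- Let k ≥ 2 and j ∈ {1,…,k−1}, and let G be a k-dimensional simplicial complex in which every simplex is contained in a k-simplex. Suppose f is an element of N_G whose support has minimum cardinality among the supports of all elements of N_G. Then the support of f is traversable. -/
open MeasureTheory Filter

attribute [local instance] Classical.propDecidable

namespace RSC

variable {V : Type*}

/-- `A` is an `i`-dimensional simplex of the complex `G`. -/
def IsSimplex (G : Set (Finset V)) (i : ℕ) (A : Finset V) : Prop :=
  A ∈ G ∧ A.card = i + 1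

/-- A `k`-dimensional simplicial complex on vertex set `V`. -/
structure IsKComplex (G : Set (Finset V)) (k : ℕ) : Prop where
  down : ∀ A ∈ G, ∀ B, B ⊆ A → B.Nonempty → B ∈ G
  singletons : ∀ v : V, ({v} : Finset V) ∈ G
  dim : ∀ A ∈ G, A.card ≤ k + 1

/-- `i`-cochains with `F₂`-coefficients. -/
abbrev Cochain (G : Set (Finset V)) (i : ℕ) : Type _ :=
  {A : Finset V // IsSimplex G i A} → ZMod 2

/-- The coboundary map `δ^i : C^i(G) → C^{i+1}(G)`. -/
noncomputable def coboundary (G : Set (Finset V)) (i : ℕ) :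
    Cochain G i →ₗ[ZMod 2] Cochain G (i + 1) where
  toFun f := fun σ => ∑ τ ∈ Finset.powersetCard (i + 1) (σ : Finset V),
      if h : IsSimplex G i τ then f ⟨τ, h⟩ else 0
  map_add' f g := by
    funext σ
    simp only [Pi.add_apply, ← Finset.sum_add_distrib]
    refine Finset.sum_congr rfl fun τ _ => ?_
    by_cases h : IsSimplex G i τ <;> simp [h]
  map_smul' c f := by
    funext σ
    simp only [Pi.smul_apply, RingHom.id_apply, Finset.smul_sum]
    refine Finset.sum_congr rfl fun τ _ => ?_
    by_cases h : IsSimplex G i τ <;> simp [h]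

/-- The submodule of `i`-cocycles. -/
noncomputable def cocycles (G : Set (Finset V)) (i : ℕ) : Submodule (ZMod 2) (Cochain G i) :=
  LinearMap.ker (coboundary G i)

/-- The submodule of `i`-coboundaries (`δ^{-1}` is the zero map). -/
noncomputable def coboundaries (G : Set (Finset V)) : (i : ℕ) → Submodule (ZMod 2) (Cochain G i)
  | 0 => ⊥
  | (i + 1) => LinearMap.range (coboundary G i)

/-- The `i`-th cohomology group `H^i(G;F₂) = ker δ^i / im δ^{i-1}`. -/
noncomputable abbrev cohomology (G : Set (Finset V)) (i : ℕ) :=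
  (cocycles G i) ⧸ ((coboundaries G i).comap (cocycles G i).subtype)

/-- `F₂`-cohomological `j`-connectedness: `H^0 ≅ F₂` and `H^i = 0` for `1 ≤ i ≤ j`. -/
def CohomConnected (G : Set (Finset V)) (j : ℕ) : Prop :=
  Nonempty (cohomology G 0 ≃ₗ[ZMod 2] ZMod 2) ∧
    ∀ i, 1 ≤ i → i ≤ j → Subsingleton (cohomology G i)

/-- The `j`-flower in `K` with centre `C`: the set of petals `C ∪ {w}`, `w ∈ K \ C`. -/
def Flower [DecidableEq V] (K C : Finset V) : Set (Finset V) :=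
  {P | ∃ w ∈ K \ C, P = insert w C}

/-- A copy of `M_j^-`: a `k`-simplex `K` together with a `(j-1)`-simplex `C ⊆ K` such that
each petal of the flower `F(K,C)` is contained in no `k`-simplex other than `K`. -/
def IsMjMinus [DecidableEq V] (G : Set (Finset V)) (k j : ℕ) (K C : Finset V) : Prop :=
  IsSimplex G k K ∧ C ∈ G ∧ C.card = j ∧ C ⊆ K ∧
    ∀ P ∈ Flower K C, ∀ K', IsSimplex G k K' → P ⊆ K' → K' = K

/-- A `j`-cycle: every `(j-1)`-simplex lies in an even number of members of `J`. -/
def IsCycle (G : Set (Finset V)) (j : ℕ) (J : Finset (Finset V)) : Prop :=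
  (∀ σ ∈ J, IsSimplex G j σ) ∧
    ∀ τ : Finset V, τ.card = j → Even (J.filter (fun σ => τ ⊆ σ)).card

/-- A copy of `M_j`. -/
def IsMj [DecidableEq V] (G : Set (Finset V)) (k j : ℕ) (K C : Finset V)
    (J : Finset (Finset V)) : Prop :=
  IsMjMinus G k j K C ∧ IsCycle G j J ∧ ∃! P : Finset V, P ∈ J ∧ P ∈ Flower K C

/-- A `j`-shell: a `(j+2)`-set all of whose `(j+1)`-subsets are `j`-simplices. -/
def IsShell (G : Set (Finset V)) (j : ℕ) (A : Finset V) : Prop :=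
  A.card = j + 2 ∧ ∀ τ ⊆ A, τ.card = j + 1 → τ ∈ G

/-- A copy of `M_j^*`. -/
def IsMjStar [DecidableEq V] (G : Set (Finset V)) (k j : ℕ) (K C : Finset V) (w a : V) : Prop :=
  IsMjMinus G k j K C ∧ w ∈ K \ C ∧ a ∉ K ∧ IsShell G j (insert a (insert w C))

/-- The support of a cochain. -/
def cochainSupport {G : Set (Finset V)} {i : ℕ} (f : Cochain G i) : Set (Finset V) :=
  {A | ∃ h : IsSimplex G i A, f ⟨A, h⟩ = 1}

/-- A cochain arising from a copy of `M_j^-`: its support is the flower `F(K,C)`. -/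
def ArisesFrom [DecidableEq V] (G : Set (Finset V)) (k j : ℕ) (f : Cochain G j)
    (K C : Finset V) : Prop :=
  IsMjMinus G k j K C ∧ cochainSupport f = Flower K C

/-- A `j`-cocycle generated by copies of `M_j^-`: it differs by a `j`-coboundary from a sum
of `j`-cocycles arising from copies of `M_j^-`. -/
def GeneratedByMjMinus [DecidableEq V] (G : Set (Finset V)) (k j : ℕ) (f : Cochain G j) : Prop :=
  ∃ (m : ℕ) (fs : Fin m → Cochain G j),
    (∀ i, ∃ K C, ArisesFrom G k j (fs i) K C) ∧
      f - (∑ i, fs i) ∈ coboundaries G j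

/-- Membership in `N_G`: a `j`-cocycle not generated by copies of `M_j^-`. -/
def InNG [DecidableEq V] (G : Set (Finset V)) (k j : ℕ) (f : Cochain G j) : Prop :=
  f ∈ cocycles G j ∧ ¬ GeneratedByMjMinus G k j f

/-- Traversability: the transitive closure of "lying in a common `k`-simplex" is `S × S`. -/
def Traversable (G : Set (Finset V)) (k : ℕ) (S : Set (Finset V)) : Prop :=
  ∀ σ₁ ∈ S, ∀ σ₂ ∈ S,
    Relation.TransGen
      (fun a b => a ∈ S ∧ b ∈ S ∧ ∃ K, IsSimplex G k K ∧ a ⊆ K ∧ b ⊆ K) σ₁ σ₂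

/-- A local obstacle: a `k`-simplex containing at least `k-j+1` many `j`-simplices,
each lying in no other `k`-simplex. -/
def IsLocalObstacle (G : Set (Finset V)) (k j : ℕ) (K : Finset V) : Prop :=
  IsSimplex G k K ∧
    k - j + 1 ≤ {σ : Finset V | IsSimplex G j σ ∧ σ ⊆ K ∧
      ∀ K', IsSimplex G k K' → σ ⊆ K' → K' = K}.ncard

/-- The random complex `G_p` given birth times `t`: all singletons together with all
non-empty subsets of `(k+1)`-sets with birth time at most `p`. -/
def complexAt (k n : ℕ) (t : Finset (Fin n) → ℝ) (p : ℝ) : Set (Finset (Fin n)) :=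
  {A | (∃ v, A = {v}) ∨
    (A.Nonempty ∧ ∃ K : Finset (Fin n), K.card = k + 1 ∧ t K ≤ p ∧ A ⊆ K)}

/-- The distribution of birth times: i.i.d. uniform on `[0,1]`. -/
noncomputable def birthMeasure (n : ℕ) : Measure (Finset (Fin n) → ℝ) :=
  Measure.pi fun _ => volume.restrict (Set.Icc (0 : ℝ) 1)

/-- `p_{M_j}`: the supremum of the probabilities `p ∈ [0,1]` at which `G_p` contains
a copy of `M_j`. -/
noncomputable def pMj (k j n : ℕ) (t : Finset (Fin n) → ℝ) : ℝ :=
  sSup {p : ℝ | p ∈ Set.Icc (0 : ℝ) 1 ∧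
    ∃ K C J, IsMj (complexAt k n t p) k j K C J}

/-- The threshold `p_j`. -/
noncomputable def pjThreshold (k j n : ℕ) : ℝ :=
  ((j + 1 : ℝ) * Real.log n + Real.log (Real.log n)) * (Nat.factorial (k - j)) /
    (((k - j + 1 : ℕ) : ℝ) * (n : ℝ) ^ (k - j))

/-- `p_j^-`. -/
noncomputable def pjMinus (k j n : ℕ) : ℝ :=
  (1 - 1 / Real.sqrt (Real.log n)) * ((j + 1 : ℝ) * Real.log n) * (Nat.factorial (k - j)) /
    (((k - j + 1 : ℕ) : ℝ) * (n : ℝ) ^ (k - j))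

/-- `p_{j-1}^-`. -/
noncomputable def pjPrevMinus (k j n : ℕ) : ℝ :=
  (1 - 1 / Real.sqrt (Real.log n)) * ((j : ℝ) * Real.log n) * (Nat.factorial (k - j + 1)) /
    (((k - j + 2 : ℕ) : ℝ) * (n : ℝ) ^ (k - j + 1))

/-- `p_j^{(1)}`. -/
noncomputable def pjOne (k j n : ℕ) : ℝ :=
  1 / (10 * ((j : ℝ) + 1) * (Nat.choose (k + 1) (j + 1)) * (n : ℝ) ^ (k - j))

/-- The number of copies of `M_j^-` in `G`. -/
noncomputable def countMjMinus (k j : ℕ) {n : ℕ} (G : Set (Finset (Fin n))) : ℕ :=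
  {x : Finset (Fin n) × Finset (Fin n) | IsMjMinus G k j x.1 x.2}.ncard

/-- The number of copies of `M_j^*` in `G`. -/
noncomputable def countMjStar (k j : ℕ) {n : ℕ} (G : Set (Finset (Fin n))) : ℕ :=
  {x : Finset (Fin n) × Finset (Fin n) × Fin n × Fin n |
    IsMjStar G k j x.1 x.2.1 x.2.2.1 x.2.2.2}.ncard

/-!
Let `T` be a set of simplices that does not split the support of `f` inside any `k`-simplex. Every
`(j+1)`-simplex lies in a `k`-simplex, so on it the restriction of `f` to `T` agrees with either `f`
or `0`; hence this restriction is again a cocycle, and `f` is the sum of the cocycles obtained by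
restricting it to `T` and to `Tᶜ`. Sums of generated cocycles are generated, so one of the two
restrictions lies in `N_G`, and minimality forces it to have the whole support of `f`. With `T` the
traversability class of a support element, this class is the whole support.
-/

section

variable {G : Set (Finset V)} {i j k l : ℕ} {S T : Set (Finset V)} {f g : Cochain G i}

/-- The cochain that agrees with `f` on the simplices in `T` and vanishes on all others. -/
noncomputable def Cochain.restrict (f : Cochain G i) (T : Set (Finset V)) : Cochain G i :=
  Set.indicator {σ | (σ : Finset V) ∈ T} f

/-- `T` is saturated with respect to `S` if no `k`-simplex of `G` contains both an element of `S`
inside `T` and an element of `S` outside `T`. When every element of `S` lies in a `k`-simplex, this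
says that `S ∩ T` is a union of traversability classes of `S`. -/
def Saturated (G : Set (Finset V)) (k : ℕ) (S T : Set (Finset V)) : Prop :=
  ∀ K, IsSimplex G k K → ∀ a ∈ S, ∀ b ∈ S, a ⊆ K → b ⊆ K → (a ∈ T ↔ b ∈ T)

theorem Saturated.compl (hT : Saturated G k S T) : Saturated G k S Tᶜ :=
  fun K hK a ha b hb haK hbK => not_congr (hT K hK a ha b hb haK hbK)

theorem Saturated.of_forall_exists_superset (hT : Saturated G k S T)
    (hcov : ∀ A, IsSimplex G l A → ∃ K, IsSimplex G k K ∧ A ⊆ K) : Saturated G l S T := by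
  intro A hA a ha b hb haA hbA
  obtain ⟨K, hK, hAK⟩ := hcov A hA
  exact hT K hK a ha b hb (haA.trans hAK) (hbA.trans hAK)

theorem traversable_of_forall_saturated (hcov : ∀ σ ∈ S, ∃ K, IsSimplex G k K ∧ σ ⊆ K)
    (hS : ∀ T, Saturated G k S T → S ⊆ T ∨ Disjoint S T) : Traversable G k S := by
  intro σ hσ
  obtain ⟨K, hK, hσK⟩ := hcov σ hσ
  let adj : Finset V → Finset V → Prop :=
    fun a b => a ∈ S ∧ b ∈ S ∧ ∃ K, IsSimplex G k K ∧ a ⊆ K ∧ b ⊆ K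
  let reachable : Set (Finset V) := {τ | Relation.TransGen adj σ τ}
  have hself : σ ∈ reachable := .single ⟨hσ, hσ, K, hK, hσK, hσK⟩
  have hsat : Saturated G k S reachable := fun K hK a ha b hb haK hbK =>
    ⟨fun h => h.tail ⟨ha, hb, K, hK, haK, hbK⟩, fun h => h.tail ⟨hb, ha, K, hK, hbK, haK⟩⟩
  exact (hS reachable hsat).resolve_right (Set.not_disjoint_iff.2 ⟨σ, hσ, hself⟩)

theorem mem_cochainSupport_iff_ne_zero {σ : {A : Finset V // IsSimplex G i A}} :
    (σ : Finset V) ∈ cochainSupport f ↔ f σ ≠ 0 :=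
  ⟨fun ⟨_, h⟩ => h.trans_ne one_ne_zero, fun h => ⟨σ.2, Fin.eq_one_of_ne_zero _ h⟩⟩

theorem cochainSupport_restrict (f : Cochain G i) (T : Set (Finset V)) :
    cochainSupport (f.restrict T) = cochainSupport f ∩ T := by
  ext σ
  simp only [cochainSupport, Cochain.restrict, Set.indicator_apply, Set.mem_ofPred_eq,
    Set.mem_inter_iff]
  by_cases hσ : σ ∈ T <;> simp [hσ]

theorem restrict_add_restrict_compl (f : Cochain G i) (T : Set (Finset V)) :
    f.restrict T + f.restrict Tᶜ = f :=
  Set.indicator_self_add_compl _ f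

theorem coboundary_apply_congr {A : {A : Finset V // IsSimplex G (i + 1) A}}
    (hfg : ∀ σ : {A : Finset V // IsSimplex G i A}, (σ : Finset V) ⊆ A → f σ = g σ) :
    coboundary G i f A = coboundary G i g A := by
  refine Finset.sum_congr rfl fun τ hτ => ?_
  split_ifs with hτG
  · exact hfg ⟨τ, hτG⟩ (Finset.mem_powersetCard.1 hτ).1
  · rfl

theorem restrict_mem_cocycles (hf : f ∈ cocycles G i)
    (hT : Saturated G (i + 1) (cochainSupport f) T) : f.restrict T ∈ cocycles G i := by
  refine LinearMap.mem_ker.2 (funext fun A => ?_)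
  by_cases hA : ∃ a ∈ cochainSupport f, a ⊆ (A : Finset V) ∧ a ∈ T
  · obtain ⟨a, ha, haA, haT⟩ := hA
    have hrestrict : coboundary G i (f.restrict T) A = coboundary G i f A := by
      refine coboundary_apply_congr fun σ hσA => Set.indicator_apply_eq_self.2 fun hσT => ?_
      by_contra hσ
      exact hσT ((hT A A.2 a ha σ (mem_cochainSupport_iff_ne_zero.2 hσ) haA hσA).1 haT)
    rw [hrestrict, LinearMap.mem_ker.1 hf]
  · have hrestrict : coboundary G i (f.restrict T) A = coboundary G i 0 A := by
      refine coboundary_apply_congr fun σ hσA => Set.indicator_apply_eq_zero.2 fun hσT => ?_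
      by_contra hσ
      exact hA ⟨σ, mem_cochainSupport_iff_ne_zero.2 hσ, hσA, hσT⟩
    rw [hrestrict, map_zero]

theorem GeneratedByMjMinus.add [DecidableEq V] {f g : Cochain G j}
    (hf : GeneratedByMjMinus G k j f) (hg : GeneratedByMjMinus G k j g) :
    GeneratedByMjMinus G k j (f + g) := by
  obtain ⟨m, fs, hfs, hf⟩ := hf
  obtain ⟨n, gs, hgs, hg⟩ := hg
  refine ⟨m + n, Fin.append fs gs, Fin.addCases (by simpa using hfs) (by simpa using hgs), ?_⟩
  simp only [Fin.sum_univ_add, Fin.append_left, Fin.append_right, add_sub_add_comm]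
  exact add_mem hf hg

theorem InNG.restrict_or_restrict_compl [DecidableEq V] {f : Cochain G j} (hf : InNG G k j f)
    (hT : Saturated G (j + 1) (cochainSupport f) T) :
    InNG G k j (f.restrict T) ∨ InNG G k j (f.restrict Tᶜ) := by
  by_contra! h
  have hgenT : GeneratedByMjMinus G k j (f.restrict T) :=
    by_contra fun hgen => h.1 ⟨restrict_mem_cocycles hf.1 hT, hgen⟩
  have hgenCompl : GeneratedByMjMinus G k j (f.restrict Tᶜ) :=
    by_contra fun hgen => h.2 ⟨restrict_mem_cocycles hf.1 hT.compl, hgen⟩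
  exact hf.2 (restrict_add_restrict_compl f T ▸ hgenT.add hgenCompl)

end

theorem statement16_general {V : Type*} [DecidableEq V] (k j : ℕ) (G : Set (Finset V))
    (hcov : ∀ A ∈ G, ∃ K, IsSimplex G k K ∧ A ⊆ K)
    (f : Cochain G j) (hf : MinimalFor (InNG G k j) cochainSupport f) :
    Traversable G k (cochainSupport f) := by
  refine traversable_of_forall_saturated (fun σ ⟨hσ, _⟩ => hcov σ hσ.1) fun T hT => ?_
  have subset_of_restrict (U : Set (Finset V)) (hU : InNG G k j (f.restrict U)) :
      cochainSupport f ⊆ U := by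
    have hmin := hf.2 hU
    rw [cochainSupport_restrict] at hmin
    exact (hmin Set.inter_subset_left).trans Set.inter_subset_right
  have hT' := hT.of_forall_exists_superset (l := j + 1) fun A hA => hcov A hA.1
  exact (hf.1.restrict_or_restrict_compl hT').imp (subset_of_restrict T) fun hTc =>
    Set.subset_compl_iff_disjoint_right.1 (subset_of_restrict Tᶜ hTc)

/-- Lemma 5.3: in a `k`-complex in which every simplex lies in a `k`-simplex, the support
of a minimum-support element of `N_G` is traversable. -/
theorem statement16 {V : Type*} [Fintype V] [DecidableEq V] (k j : ℕ) (hk : 2 ≤ k)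
    (hj : 1 ≤ j) (hjk : j < k) (G : Set (Finset V)) (hG : IsKComplex G k)
    (hcov : ∀ A ∈ G, ∃ K, IsSimplex G k K ∧ A ⊆ K)
    (f : Cochain G j) (hf : InNG G k j f)
    (hmin : ∀ g : Cochain G j, InNG G k j g →
      (cochainSupport f).ncard ≤ (cochainSupport g).ncard) :
    Traversable G k (cochainSupport f) :=
  statement16_general k j G hcov f
    ⟨hf, fun g hg hgf => (Set.eq_of_subset_of_ncard_le hgf (hmin g hg)).ge⟩

end RSC
end

section
/- Let k ≥ 2 and j ∈ {1,…,k−1}. Let p = p(n) satisfy p = (1+o(1))·p_j, where p_j := ((j+1)·log n + log log n)·(k−j)!/((k−j+1)·n^{k−j}). Then for any constant d ≥ k−j+2, with high probability there is no j-cocycle in G_p whose support is traversable and has size s for any s with k−j+2 ≤ s ≤ d. -/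
open MeasureTheory Filter

attribute [local instance] Classical.propDecidable

namespace RSC

variable {V : Type*}

/-!
Let `S` be the support of a `j`-cocycle, traversable and of size at least `s`. Since `S` is
traversable, it is covered by a family of `m + 1 ≤ |S|` present `k`-simplices that can be listed so
that each one shares a `j`-face with an earlier one; there are `O(n^(k+1+m(k-j)))` such families,
each present with probability `p^(m+1)`. Since `S` supports a cocycle, no present `k`-simplex
contains exactly one member of `S`, which forbids about `|S| n^(k-j)/(k-j)!` further simplices.
Writing `x = p n^(k-j)`, the expected number of such configurations is of order
`n^(j+1) x^(m+1) exp(-s x/(k-j)!)`. This tends to zero once `s x` exceeds `(j+1) (k-j)! log n` by a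
constant factor. At the threshold `p_j` one has `x ≥ (1+o(1)) (j+1) (k-j)! log n/(k-j+1)`, so every
`s ≥ k-j+2` is large enough, while `s = k-j+1` is the borderline case.
-/

section Families

open Finset
open scoped Nat

variable {k j m s d : ℕ}

/-- The `j`-dimensional faces of the members of `T`. -/
noncomputable def faces (j : ℕ) (T : Finset (Finset V)) : Finset (Finset V) :=
  T.biUnion (powersetCard (j + 1))

lemma mem_faces {T : Finset (Finset V)} {σ : Finset V} :
    σ ∈ faces j T ↔ ∃ K ∈ T, σ ⊆ K ∧ #σ = j + 1 := by
  simp only [faces, mem_biUnion, mem_powersetCard]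

lemma faces_mono {T T' : Finset (Finset V)} (h : T ⊆ T') : faces j T ⊆ faces j T' :=
  biUnion_subset_biUnion_of_subset_left _ h

variable [Fintype V]

/-- The `k`-simplices outside `T` that share a `j`-face with a member of `T`. -/
noncomputable def neighbors (k j : ℕ) (T : Finset (Finset V)) : Finset (Finset V) :=
  {K ∈ powersetCard (k + 1) univ | K ∉ T ∧ ∃ σ ∈ faces j T, σ ⊆ K}

variable (V) in
/-- The sets of `m + 1` many `k`-simplices that a search can build by adding one simplex at a
time, each sharing a `j`-face with an earlier one. -/
noncomputable def connectedFamilies (k j : ℕ) : ℕ → Finset (Finset (Finset V))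
  | 0 => (powersetCard (k + 1) univ).image singleton
  | m + 1 => (connectedFamilies k j m).biUnion fun T => (neighbors k j T).image (insert · T)

/-- The `k`-simplices containing exactly one member of `S`. None of them may be present in a
complex in which `S` is the support of a cocycle. -/
noncomputable def isolators (k : ℕ) (S : Finset (Finset V)) : Finset (Finset V) :=
  {K ∈ powersetCard (k + 1) univ | ∃! σ, σ ∈ S ∧ σ ⊆ K}

variable (V) in
/-- The pairs of a connected family of `m + 1` many `k`-simplices and a set of between `s` and
`d` of its `j`-faces. The union bound over potential cocycle supports runs over these pairs. -/
noncomputable def candidates (k j s d m : ℕ) :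
    Finset ((_ : Finset (Finset V)) × Finset (Finset V)) :=
  (connectedFamilies V k j m).sigma fun T => {S ∈ (faces j T).powerset | s ≤ #S ∧ #S ≤ d}

lemma mem_neighbors {T : Finset (Finset V)} {K : Finset V} :
    K ∈ neighbors k j T ↔ #K = k + 1 ∧ K ∉ T ∧ ∃ σ ∈ faces j T, σ ⊆ K := by
  simp only [neighbors, mem_filter, mem_powersetCard_univ]

lemma mem_connectedFamilies_zero {T : Finset (Finset V)} :
    T ∈ connectedFamilies V k j 0 ↔ ∃ K, #K = k + 1 ∧ {K} = T := by
  simp only [connectedFamilies, mem_image, mem_powersetCard_univ]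

lemma mem_connectedFamilies_succ {T : Finset (Finset V)} :
    T ∈ connectedFamilies V k j (m + 1) ↔
      ∃ T' ∈ connectedFamilies V k j m, ∃ K ∈ neighbors k j T', insert K T' = T := by
  simp only [connectedFamilies, mem_biUnion, mem_image]

lemma card_of_mem_connectedFamilies {T : Finset (Finset V)} (hT : T ∈ connectedFamilies V k j m) :
    #T = m + 1 := by
  induction m generalizing T with
  | zero =>
    obtain ⟨K, -, rfl⟩ := mem_connectedFamilies_zero.1 hT
    exact card_singleton K
  | succ m ih =>
    obtain ⟨T', hT', K, hK, rfl⟩ := mem_connectedFamilies_succ.1 hT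
    rw [card_insert_of_notMem (mem_neighbors.1 hK).2.1, ih hT']

lemma sized_of_mem_connectedFamilies {T : Finset (Finset V)}
    (hT : T ∈ connectedFamilies V k j m) : (T : Set (Finset V)).Sized (k + 1) := by
  induction m generalizing T with
  | zero =>
    obtain ⟨K, hK, rfl⟩ := mem_connectedFamilies_zero.1 hT
    rwa [coe_singleton, Set.sized_singleton]
  | succ m ih =>
    obtain ⟨T', hT', K, hK, rfl⟩ := mem_connectedFamilies_succ.1 hT
    intro K' hK'
    obtain rfl | hK'T' := mem_insert.1 (mem_coe.1 hK')
    · exact (mem_neighbors.1 hK).1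
    · exact ih hT' hK'T'

lemma card_faces_le {T : Finset (Finset V)} (hT : T ∈ connectedFamilies V k j m) :
    #(faces j T) ≤ (m + 1) * 2 ^ (k + 1) := by
  rw [← card_of_mem_connectedFamilies hT]
  refine card_biUnion_le_card_mul _ _ _ fun K hK => ?_
  rw [card_powersetCard, sized_of_mem_connectedFamilies hT hK]
  exact Nat.choose_le_two_pow _ _

lemma neighbors_subset_image_union (T : Finset (Finset V)) :
    neighbors k j T ⊆
      (faces j T ×ˢ powersetCard (k - j) univ).image fun x => x.1 ∪ x.2 := by
  intro K hK
  obtain ⟨hKcard, -, σ, hσ, hσK⟩ := mem_neighbors.1 hK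
  obtain ⟨-, -, -, hσcard⟩ := mem_faces.1 hσ
  refine mem_image.2 ⟨(σ, K \ σ), mem_product.2 ⟨hσ, mem_powersetCard_univ.2 ?_⟩,
    union_sdiff_of_subset hσK⟩
  rw [card_sdiff_of_subset hσK, hKcard, hσcard, Nat.add_sub_add_right]

lemma card_neighbors_le {T : Finset (Finset V)} (hT : T ∈ connectedFamilies V k j m) :
    #(neighbors k j T) ≤ (m + 1) * 2 ^ (k + 1) * Fintype.card V ^ (k - j) :=
  calc #(neighbors k j T)
      ≤ #(faces j T ×ˢ powersetCard (k - j) (univ : Finset V)) :=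
        (card_le_card (neighbors_subset_image_union T)).trans card_image_le
    _ = #(faces j T) * (Fintype.card V).choose (k - j) := by
        rw [card_product, card_powersetCard, card_univ]
    _ ≤ (m + 1) * 2 ^ (k + 1) * Fintype.card V ^ (k - j) :=
        Nat.mul_le_mul (card_faces_le hT) (Nat.choose_le_pow _ _)

lemma card_connectedFamilies_le :
    #(connectedFamilies V k j m) ≤
      Fintype.card V ^ (k + 1) * (m ! * (2 ^ (k + 1) * Fintype.card V ^ (k - j)) ^ m) := by
  induction m with
  | zero =>
    calc #(connectedFamilies V k j 0) ≤ (Fintype.card V).choose (k + 1) :=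
          card_image_le.trans (by rw [card_powersetCard, card_univ])
      _ ≤ _ := by simpa using Nat.choose_le_pow (Fintype.card V) (k + 1)
  | succ m ih =>
    calc #(connectedFamilies V k j (m + 1))
        ≤ #(connectedFamilies V k j m) * ((m + 1) * 2 ^ (k + 1) * Fintype.card V ^ (k - j)) :=
          card_biUnion_le_card_mul _ _ _ fun T hT => card_image_le.trans (card_neighbors_le hT)
      _ ≤ Fintype.card V ^ (k + 1) * (m ! * (2 ^ (k + 1) * Fintype.card V ^ (k - j)) ^ m) *
            ((m + 1) * 2 ^ (k + 1) * Fintype.card V ^ (k - j)) := Nat.mul_le_mul_right _ ih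
      _ = _ := by rw [Nat.factorial_succ]; ring

lemma card_candidates_le :
    #(candidates V k j s d m) ≤
      Fintype.card V ^ (k + 1) * (m ! * (2 ^ (k + 1) * Fintype.card V ^ (k - j)) ^ m) *
        2 ^ ((m + 1) * 2 ^ (k + 1)) := by
  rw [candidates, card_sigma]
  refine (sum_le_card_nsmul _ _ (2 ^ ((m + 1) * 2 ^ (k + 1))) fun T hT => ?_).trans
    (Nat.mul_le_mul_right _ card_connectedFamilies_le)
  calc #{S ∈ (faces j T).powerset | s ≤ #S ∧ #S ≤ d}
      ≤ 2 ^ #(faces j T) := (card_filter_le _ _).trans (card_powerset _).le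
    _ ≤ 2 ^ ((m + 1) * 2 ^ (k + 1)) := Nat.pow_le_pow_right two_pos (card_faces_le hT)

lemma union_mem_isolators (hjk : j ≤ k) {S : Finset (Finset V)}
    (hS : (S : Set (Finset V)).Sized (j + 1)) {σ W : Finset V} (hσ : σ ∈ S)
    (hW : #W = k - j) (hdisj : Disjoint (S.biUnion id) W) : σ ∪ W ∈ isolators k S := by
  have hdisjS : ∀ τ ∈ S, Disjoint τ W := fun τ hτ =>
    hdisj.mono_left (subset_biUnion_of_mem id hτ)
  refine mem_filter.2 ⟨mem_powersetCard_univ.2 ?_, σ, ⟨hσ, subset_union_left⟩, ?_⟩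
  · rw [card_union_of_disjoint (hdisjS σ hσ), hS hσ, hW]
    omega
  · rintro τ ⟨hτ, hτK⟩
    exact eq_of_subset_of_card_le ((hdisjS τ hτ).left_le_of_le_sup_right hτK)
      (by rw [hS hσ, hS hτ])

lemma card_mul_choose_le_card_isolators (hjk : j ≤ k) {S : Finset (Finset V)}
    (hS : (S : Set (Finset V)).Sized (j + 1)) :
    #S * (Fintype.card V - #S * (j + 1)).choose (k - j) ≤ #(isolators k S) := by
  set U := S.biUnion id
  have hUcard : #U ≤ #S * (j + 1) := card_biUnion_le_card_mul _ _ _ fun σ hσ => (hS hσ).le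
  have hdisj : ∀ W ∈ powersetCard (k - j) Uᶜ, Disjoint U W := fun W hW =>
    disjoint_compl_right.mono_right (mem_powersetCard.1 hW).1
  have hinj : Set.InjOn (fun x : Finset V × Finset V => x.1 ∪ x.2)
      (S ×ˢ powersetCard (k - j) Uᶜ : Finset _) := by
    refine Set.LeftInvOn.injOn (f₁' := fun K => (K ∩ U, K \ U)) fun x hx => ?_
    obtain ⟨hσ, hW⟩ := mem_product.1 (mem_coe.1 hx)
    have hσU : x.1 ⊆ U := subset_biUnion_of_mem id hσ
    have hWU := hdisj _ hW
    refine Prod.ext ?_ ?_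
    · simp [union_inter_distrib_right, inter_eq_left.2 hσU, disjoint_iff_inter_eq_empty.1 hWU.symm]
    · simp [union_sdiff_distrib, sdiff_eq_empty_iff_subset.2 hσU,
        sdiff_eq_self_of_disjoint hWU.symm]
  calc #S * (Fintype.card V - #S * (j + 1)).choose (k - j)
      ≤ #S * (#Uᶜ).choose (k - j) := by
        rw [card_compl]
        gcongr
    _ = #(S ×ˢ powersetCard (k - j) Uᶜ) := by rw [card_product, card_powersetCard]
    _ ≤ #(isolators k S) := by
        refine card_le_card_of_injOn _ (fun x hx => ?_) hinj
        obtain ⟨hσ, hW⟩ := mem_product.1 (mem_coe.1 hx)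
        exact union_mem_isolators hjk hS hσ (mem_powersetCard.1 hW).2 (hdisj _ hW)

end Families

section Traversal

open Finset

variable {G : Set (Finset V)} {k j m : ℕ} {S T : Finset (Finset V)}

lemma exists_rel_of_transGen {α : Type*} {r : α → α → Prop} {A : Set α} {x y : α}
    (h : Relation.TransGen r x y) (hx : x ∈ A) (hy : y ∉ A) : ∃ a ∈ A, ∃ b ∉ A, r a b := by
  by_contra! hclosed
  exact h.closed' (P := (· ∉ A)) (fun hr hb ha => hclosed _ ha _ hb hr) hy hx

lemma Traversable.exists_isSimplex_superset (hS : Traversable G k (S : Set (Finset V)))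
    {σ : Finset V} (hσ : σ ∈ S) : ∃ K, IsSimplex G k K ∧ σ ⊆ K := by
  obtain ⟨τ, ⟨-, -, K, hK, hσK, -⟩, -⟩ := Relation.TransGen.head'_iff.1 (hS σ hσ σ hσ)
  exact ⟨K, hK, hσK⟩

lemma Traversable.exists_crossing_simplex (hS : Traversable G k (S : Set (Finset V)))
    {A : Set (Finset V)} {σ τ : Finset V} (hσ : σ ∈ S) (hσA : σ ∈ A) (hτ : τ ∈ S) (hτA : τ ∉ A) :
    ∃ a ∈ S, a ∈ A ∧ ∃ b ∈ S, b ∉ A ∧ ∃ K, IsSimplex G k K ∧ a ⊆ K ∧ b ⊆ K := by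
  obtain ⟨a, haA, b, hbA, ha, hb, hK⟩ := exists_rel_of_transGen (hS σ hσ τ hτ) hσA hτA
  exact ⟨a, ha, haA, b, hb, hbA, hK⟩

variable [Fintype V]

lemma Traversable.exists_neighbor_of_not_subset_faces
    (hS : Traversable G k (S : Set (Finset V))) (hSj : (S : Set (Finset V)).Sized (j + 1))
    (hne : (S ∩ faces j T).Nonempty) (hcover : ¬ S ⊆ faces j T) :
    ∃ K ∈ neighbors k j T, IsSimplex G k K ∧
      #(S ∩ faces j T) < #(S ∩ faces j (insert K T)) := by
  obtain ⟨σ, hσ⟩ := hne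
  obtain ⟨hσS, hσT⟩ := mem_inter.1 hσ
  obtain ⟨τ, hτS, hτT⟩ := not_subset.1 hcover
  obtain ⟨a, -, haT, b, hbS, hbT, K, hK, haK, hbK⟩ :=
    hS.exists_crossing_simplex (A := (faces j T : Set (Finset V))) hσS hσT hτS hτT
  have hKT : K ∉ T := fun hKT => hbT (mem_faces.2 ⟨K, hKT, hbK, hSj hbS⟩)
  have hb : b ∈ S ∩ faces j (insert K T) :=
    mem_inter.2 ⟨hbS, mem_faces.2 ⟨K, mem_insert_self K T, hbK, hSj hbS⟩⟩
  refine ⟨K, mem_neighbors.2 ⟨hK.2, hKT, a, haT, haK⟩, hK, card_lt_card ?_⟩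
  exact (ssubset_iff_of_subset (inter_subset_inter_left (faces_mono (subset_insert K T)))).2
    ⟨b, hb, fun h => hbT (mem_inter.1 h).2⟩

lemma Traversable.exists_connectedFamily_superset
    (hS : Traversable G k (S : Set (Finset V))) (hSj : (S : Set (Finset V)).Sized (j + 1))
    (hne : S.Nonempty) :
    ∃ m < #S, ∃ T ∈ connectedFamilies V k j m, (∀ K ∈ T, IsSimplex G k K) ∧ S ⊆ faces j T := by
  by_contra! hcover
  have hsearch : ∀ m, ∃ T ∈ connectedFamilies V k j m,
      (∀ K ∈ T, IsSimplex G k K) ∧ m < #(S ∩ faces j T) := by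
    intro m
    induction m with
    | zero =>
      obtain ⟨σ, hσ⟩ := hne
      obtain ⟨K, hK, hσK⟩ := hS.exists_isSimplex_superset hσ
      refine ⟨{K}, mem_connectedFamilies_zero.2 ⟨K, hK.2, rfl⟩, by simpa using hK, ?_⟩
      exact card_pos.2
        ⟨σ, mem_inter.2 ⟨hσ, mem_faces.2 ⟨K, mem_singleton_self K, hσK, hSj hσ⟩⟩⟩
    | succ m ih =>
      obtain ⟨T, hT, hTG, hm⟩ := ih
      obtain ⟨K, hKT, hK, hlt⟩ := hS.exists_neighbor_of_not_subset_faces hSj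
        (card_pos.1 (Nat.zero_lt_of_lt hm))
        (hcover m (hm.trans_le (card_le_card inter_subset_left)) T hT hTG)
      exact ⟨insert K T, mem_connectedFamilies_succ.2 ⟨T, hT, K, hKT, rfl⟩,
        forall_mem_insert _ _ _ |>.2 ⟨hK, hTG⟩, Nat.lt_of_le_of_lt hm hlt⟩
  obtain ⟨T, -, -, hT⟩ := hsearch #S
  exact hT.not_ge (card_le_card inter_subset_left)

end Traversal

section Cocycles

variable {G : Set (Finset V)} {i j k n : ℕ}

lemma not_existsUnique_cochainSupport_of_isSimplex_succ {f : Cochain G j} (hf : f ∈ cocycles G j)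
    {τ : Finset V} (hτ : IsSimplex G (j + 1) τ) : ¬ ∃! σ, σ ∈ cochainSupport f ∧ σ ⊆ τ := by
  rintro ⟨σ, ⟨⟨hσ, hfσ⟩, hστ⟩, hunique⟩
  have hcoboundary : coboundary G j f ⟨τ, hτ⟩ = 1 := by
    change ∑ ρ ∈ τ.powersetCard (j + 1), (if h : IsSimplex G j ρ then f ⟨ρ, h⟩ else 0) = 1
    rw [Finset.sum_eq_single_of_mem σ (Finset.mem_powersetCard.2 ⟨hστ, hσ.2⟩), dif_pos hσ, hfσ]
    intro ρ hρτ hρσ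
    refine dite_eq_right_iff.2 fun hρ => ?_
    by_contra hfρ
    exact hρσ (hunique ρ ⟨⟨hρ, Fin.eq_one_of_ne_zero _ hfρ⟩, (Finset.mem_powersetCard.1 hρτ).1⟩)
  rw [LinearMap.mem_ker.1 hf] at hcoboundary
  exact zero_ne_one hcoboundary

lemma IsKComplex.not_existsUnique_cochainSupport (hG : IsKComplex G k) (hji : j < i)
    {f : Cochain G j} (hf : f ∈ cocycles G j) {K : Finset V} (hK : IsSimplex G i K) :
    ¬ ∃! σ, σ ∈ cochainSupport f ∧ σ ⊆ K := by
  rintro ⟨σ, ⟨hσf, hσK⟩, hunique⟩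
  have hσcard : σ.card = j + 1 := hσf.1.2
  obtain ⟨v, hvK, hvσ⟩ : ∃ v ∈ K, v ∉ σ :=
    Finset.exists_mem_notMem_of_card_lt_card (by rw [hσcard, hK.2]; omega)
  have hτK : insert v σ ⊆ K := Finset.insert_subset hvK hσK
  have hτ : IsSimplex G (j + 1) (insert v σ) :=
    ⟨hG.down K hK.1 _ hτK (Finset.insert_nonempty v σ), by
      rw [Finset.card_insert_of_notMem hvσ, hσcard]⟩
  exact not_existsUnique_cochainSupport_of_isSimplex_succ hf hτ
    ⟨σ, ⟨hσf, Finset.subset_insert v σ⟩, fun ρ hρ => hunique ρ ⟨hρ.1, hρ.2.trans hτK⟩⟩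

variable {t : Finset (Fin n) → ℝ} {p : ℝ}

lemma isKComplex_complexAt : IsKComplex (complexAt k n t p) k where
  down := by
    rintro A (⟨v, rfl⟩ | ⟨-, K, hK, ht, hAK⟩) B hBA hB
    · exact Or.inl ⟨v, (Finset.Nonempty.subset_singleton_iff hB).1 hBA⟩
    · exact Or.inr ⟨hB, K, hK, ht, hBA.trans hAK⟩
  singletons v := Or.inl ⟨v, rfl⟩
  dim := by
    rintro A (⟨v, rfl⟩ | ⟨-, K, hK, -, hAK⟩)
    · simp
    · exact (Finset.card_le_card hAK).trans hK.le

lemma isSimplex_complexAt_iff (hk : 0 < k) {K : Finset (Fin n)} :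
    IsSimplex (complexAt k n t p) k K ↔ K.card = k + 1 ∧ t K ≤ p := by
  constructor
  · rintro ⟨⟨v, rfl⟩ | ⟨-, K', hK', ht, hKK'⟩, hK⟩
    · simp only [Finset.card_singleton] at hK
      omega
    · obtain rfl := Finset.eq_of_subset_of_card_le hKK' (by omega)
      exact ⟨hK, ht⟩
  · rintro ⟨hK, ht⟩
    exact ⟨Or.inr ⟨Finset.card_pos.1 (by omega), K, hK, ht, subset_rfl⟩, hK⟩

end Cocycles

section FirstMoment

open Finset
open scoped Nat

variable {k j n s d : ℕ} {p : ℝ}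

/-- The event that every index in `T` has birth time at most `p` and no index in `B` does. -/
def birthEvent {ι : Type*} (p : ℝ) (T B : Finset ι) : Set (ι → ℝ) :=
  {t | (∀ i ∈ T, t i ≤ p) ∧ ∀ i ∈ B, p < t i}

/-- The event that the complex at time `p` has a `j`-cocycle whose support is traversable and has
size between `s` and `d`. -/
def smallCocycleEvent (k j n s d : ℕ) (p : ℝ) : Set (Finset (Fin n) → ℝ) :=
  {t | ∃ f ∈ cocycles (complexAt k n t p) j, Traversable (complexAt k n t p) k (cochainSupport f) ∧
    s ≤ (cochainSupport f).ncard ∧ (cochainSupport f).ncard ≤ d}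

lemma smallCocycleEvent_subset_iUnion_birthEvent (hjk : j < k) (hs : 0 < s) :
    smallCocycleEvent k j n s d p ⊆ ⋃ m ∈ range d, ⋃ x ∈ candidates (Fin n) k j s d m,
      birthEvent p x.1 (isolators k x.2) := by
  rintro t ⟨f, hf, htrav, hsize⟩
  obtain ⟨S, hS⟩ := (cochainSupport f).toFinite.exists_finset_coe
  have hSj : (S : Set (Finset (Fin n))).Sized (j + 1) := by
    rw [hS]
    exact fun σ ⟨hσ, _⟩ => hσ.2
  rw [← hS] at htrav
  rw [← hS, Set.ncard_coe_finset] at hsize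
  obtain ⟨m, hm, T, hT, hTG, hST⟩ :=
    htrav.exists_connectedFamily_superset hSj (card_pos.1 (hs.trans_le hsize.1))
  simp only [Set.mem_iUnion]
  refine ⟨m, mem_range.2 (hm.trans_le hsize.2), ⟨T, S⟩,
    mem_sigma.2 ⟨hT, mem_filter.2 ⟨mem_powerset.2 hST, hsize⟩⟩, fun K hK => ?_, fun K hK => ?_⟩
  · exact ((isSimplex_complexAt_iff (by omega)).1 (hTG K hK)).2
  · obtain ⟨hKcard, hunique⟩ := mem_filter.1 hK
    by_contra! htK
    refine isKComplex_complexAt.not_existsUnique_cochainSupport hjk hf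
      ((isSimplex_complexAt_iff (by omega)).2 ⟨mem_powersetCard_univ.1 hKcard, htK⟩) ?_
    simpa only [← hS, mem_coe] using hunique

lemma uniform_real_Iic_inter_Ioi_le (hp : 0 ≤ p) (a b : Prop) [Decidable a] [Decidable b] :
    (volume.restrict (Set.Icc (0 : ℝ) 1)).real {x | (a → x ≤ p) ∧ (b → p < x)} ≤
      (if a then p else 1) * if b then Real.exp (-p) else 1 := by
  have hprob : IsProbabilityMeasure (volume.restrict (Set.Icc (0 : ℝ) 1)) := ⟨by simp⟩
  by_cases ha : a <;> by_cases hb : b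
  · have hempty : {x : ℝ | (a → x ≤ p) ∧ (b → p < x)} = ∅ :=
      Set.eq_empty_of_forall_notMem fun x hx => (hx.2 hb).not_ge (hx.1 ha)
    rw [hempty, measureReal_empty]
    positivity
  · have hIic : {x : ℝ | (a → x ≤ p) ∧ (b → p < x)} = Set.Iic p := by ext; simp [ha, hb]
    rw [hIic, measureReal_restrict_apply measurableSet_Iic, if_pos ha, if_neg hb, mul_one]
    calc volume.real (Set.Iic p ∩ Set.Icc 0 1) ≤ volume.real (Set.Icc 0 p) :=
          measureReal_mono (fun x hx => ⟨hx.2.1, hx.1⟩) measure_Icc_lt_top.ne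
      _ = p := by simp [hp]
  · have hIoi : {x : ℝ | (a → x ≤ p) ∧ (b → p < x)} = Set.Ioi p := by ext; simp [ha, hb]
    rw [hIoi, measureReal_restrict_apply measurableSet_Ioi, if_neg ha, if_pos hb, one_mul]
    calc volume.real (Set.Ioi p ∩ Set.Icc 0 1) ≤ volume.real (Set.Icc p 1) :=
          measureReal_mono (fun x hx => ⟨hx.1.le, hx.2.2⟩) measure_Icc_lt_top.ne
      _ = max (1 - p) 0 := Real.volume_real_Icc
      _ ≤ Real.exp (-p) := max_le (Real.one_sub_le_exp_neg p) (Real.exp_nonneg _)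
  · simp [ha, hb]

lemma pi_uniform_real_birthEvent_le {ι : Type*} [Fintype ι] (hp : 0 ≤ p) (T B : Finset ι) :
    (Measure.pi fun _ : ι => volume.restrict (Set.Icc (0 : ℝ) 1)).real (birthEvent p T B) ≤
      p ^ #T * Real.exp (-(p * #B)) := by
  have hbox : birthEvent p T B = Set.univ.pi fun i => {x | (i ∈ T → x ≤ p) ∧ (i ∈ B → p < x)} := by
    ext t
    simp only [birthEvent, Set.mem_ofPred_eq, Set.mem_univ_pi, forall_and]
  rw [hbox, measureReal_def, Measure.pi_pi, ENNReal.toReal_prod]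
  calc ∏ i, (volume.restrict (Set.Icc (0 : ℝ) 1)).real {x | (i ∈ T → x ≤ p) ∧ (i ∈ B → p < x)}
      ≤ ∏ i, ((if i ∈ T then p else 1) * if i ∈ B then Real.exp (-p) else 1) :=
        prod_le_prod (fun _ _ => measureReal_nonneg) fun i _ => uniform_real_Iic_inter_Ioi_le hp _ _
    _ = p ^ #T * Real.exp (-p) ^ #B := by
        simp only [prod_mul_distrib, prod_ite_mem, univ_inter, prod_const]
    _ = p ^ #T * Real.exp (-(p * #B)) := by rw [← Real.exp_nat_mul]; ring_nf

instance isProbabilityMeasure_birthMeasure : IsProbabilityMeasure (birthMeasure n) := by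
  have : IsProbabilityMeasure (volume.restrict (Set.Icc (0 : ℝ) 1)) := ⟨by simp⟩
  unfold birthMeasure
  infer_instance

lemma birthMeasure_real_candidate_le (hjk : j ≤ k) (hp : 0 ≤ p) {m : ℕ}
    {x : (_ : Finset (Finset (Fin n))) × Finset (Finset (Fin n))}
    (hx : x ∈ candidates (Fin n) k j s d m) :
    (birthMeasure n).real (birthEvent p x.1 (isolators k x.2)) ≤
      p ^ (m + 1) * Real.exp (-(p * (s * (n - d * (j + 1)).choose (k - j)))) := by
  obtain ⟨hT, hS⟩ := mem_sigma.1 hx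
  obtain ⟨hSfaces, hsS, hSd⟩ := mem_filter.1 hS
  have hSj : (x.2 : Set (Finset (Fin n))).Sized (j + 1) := fun σ hσ =>
    (mem_faces.1 (mem_powerset.1 hSfaces hσ)).elim fun _ h => h.2.2
  have hisolators : s * (n - d * (j + 1)).choose (k - j) ≤ #(isolators k x.2) :=
    calc s * (n - d * (j + 1)).choose (k - j)
        ≤ #x.2 * (Fintype.card (Fin n) - #x.2 * (j + 1)).choose (k - j) := by
          rw [Fintype.card_fin]
          gcongr
      _ ≤ #(isolators k x.2) := card_mul_choose_le_card_isolators hjk hSj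
  calc (birthMeasure n).real (birthEvent p x.1 (isolators k x.2))
      ≤ p ^ #x.1 * Real.exp (-(p * #(isolators k x.2))) := pi_uniform_real_birthEvent_le hp _ _
    _ ≤ p ^ (m + 1) * Real.exp (-(p * (s * (n - d * (j + 1)).choose (k - j)))) := by
        rw [card_of_mem_connectedFamilies hT]
        gcongr
        exact_mod_cast hisolators

lemma birthMeasure_real_smallCocycleEvent_le (hjk : j < k) (hs : 0 < s) (hp : 0 ≤ p) :
    (birthMeasure n).real (smallCocycleEvent k j n s d p) ≤
      ∑ m ∈ range d, (m ! * (2 ^ (k + 1)) ^ m * 2 ^ ((m + 1) * 2 ^ (k + 1))) *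
        ((n : ℝ) ^ (j + 1) * ((p * n ^ (k - j)) ^ (m + 1) *
          Real.exp (-(p * (s * (n - d * (j + 1)).choose (k - j)))))) := by
  refine (measureReal_mono (smallCocycleEvent_subset_iUnion_birthEvent hjk hs)
    (measure_ne_top _ _)).trans
      ((measureReal_biUnion_finset_le _ _).trans (sum_le_sum fun m _ => ?_))
  set q := p ^ (m + 1) * Real.exp (-(p * (s * (n - d * (j + 1)).choose (k - j))))
  calc (birthMeasure n).real
        (⋃ x ∈ candidates (Fin n) k j s d m, birthEvent p x.1 (isolators k x.2))
      ≤ ∑ x ∈ candidates (Fin n) k j s d m,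
          (birthMeasure n).real (birthEvent p x.1 (isolators k x.2)) :=
        measureReal_biUnion_finset_le _ _
    _ ≤ #(candidates (Fin n) k j s d m) * q := by
        rw [← nsmul_eq_mul]
        exact sum_le_card_nsmul _ _ _ fun x hx => birthMeasure_real_candidate_le hjk.le hp hx
    _ ≤ (n ^ (k + 1) * (m ! * (2 ^ (k + 1) * n ^ (k - j)) ^ m) * 2 ^ ((m + 1) * 2 ^ (k + 1))) *
          q := by
        gcongr
        exact_mod_cast Fintype.card_fin n ▸ card_candidates_le (V := Fin n)
    _ = _ := by
        rw [show k + 1 = j + 1 + (k - j) by omega]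
        simp only [q]
        ring

end FirstMoment

section Asymptotics

open Asymptotics
open scoped Nat

variable {k j s : ℕ}

lemma isEquivalent_natCast_sub (D : ℕ) :
    (fun n : ℕ => ((n - D : ℕ) : ℝ)) ~[atTop] fun n : ℕ => (n : ℝ) := by
  refine isEquivalent_of_tendsto_one ?_
  have hratio : Tendsto (fun n : ℕ => 1 - (D : ℝ) / n) atTop (nhds 1) := by
    simpa using tendsto_const_nhds.sub (tendsto_const_div_atTop_nhds_zero_nat (D : ℝ))
  refine hratio.congr' ?_
  filter_upwards [eventually_ge_atTop D, eventually_gt_atTop 0] with n hnD hn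
  rw [Pi.div_apply, Nat.cast_sub hnD, sub_div, div_self (by positivity)]

lemma tendsto_choose_sub_div_pow (D r : ℕ) :
    Tendsto (fun n : ℕ => ((n - D).choose r : ℝ) / n ^ r) atTop (nhds (1 / r !)) := by
  have hequiv : (fun n : ℕ => ((n - D).choose r : ℝ)) ~[atTop] fun n : ℕ => (n : ℝ) ^ r / r ! :=
    ((isEquivalent_choose r).comp_tendsto (tendsto_sub_atTop_nat D)).trans
      (((isEquivalent_natCast_sub D).pow r).div .refl)
  refine (hequiv.div .refl).symm.tendsto_nhds (tendsto_const_nhds.congr' ?_)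
  filter_upwards [eventually_gt_atTop 0] with n hn
  simp only [Pi.div_apply]
  field_simp

lemma tendsto_pow_mul_pow_mul_exp_neg {e m : ℕ} {c β : ℝ} {x y : ℕ → ℝ} (hc : 0 < c)
    (hx : ∀ᶠ n : ℕ in atTop, c * Real.log n ≤ x n) (hy : Tendsto y atTop (nhds β))
    (h : e < c * β) :
    Tendsto (fun n : ℕ => (n : ℝ) ^ e * (x n ^ m * Real.exp (-(x n * y n)))) atTop (nhds 0) := by
  have hlog : Tendsto (fun n : ℕ => Real.log n) atTop atTop :=
    Real.tendsto_log_atTop.comp tendsto_natCast_atTop_atTop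
  have hxtop : Tendsto x atTop atTop := tendsto_atTop_mono' _ hx (hlog.const_mul_atTop hc)
  -- Of a decay rate `β'` below `β`, the part `e / c` absorbs `n ^ e` and the rest `x n ^ m`.
  obtain ⟨β', hβ', hβ'β⟩ := exists_between ((div_lt_iff₀' hc).2 h)
  have hdecay : Tendsto (fun n => x n ^ m * Real.exp (-(β' - e / c) * x n)) atTop (nhds 0) := by
    simpa only [Real.rpow_natCast, Function.comp_def] using
      (tendsto_rpow_mul_exp_neg_mul_atTop_nhds_zero m _ (sub_pos.2 hβ')).comp hxtop
  refine squeeze_zero' ?_ ?_ hdecay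
  · filter_upwards [hxtop.eventually_ge_atTop 0] with n hxn
    positivity
  · filter_upwards [hx, hxtop.eventually_ge_atTop 0, hy.eventually (lt_mem_nhds hβ'β),
      eventually_gt_atTop 0] with n hcx hx0 hβ'y hn
    have hpow : (n : ℝ) ^ e ≤ Real.exp (e / c * x n) := by
      rw [← Real.log_le_iff_le_exp (by positivity), Real.log_pow, div_mul_eq_mul_div,
        le_div_iff₀ hc, mul_assoc, mul_comm _ c]
      gcongr
    calc (n : ℝ) ^ e * (x n ^ m * Real.exp (-(x n * y n)))
        ≤ Real.exp (e / c * x n) * (x n ^ m * Real.exp (-(x n * β'))) := by gcongr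
      _ = x n ^ m * Real.exp (-(β' - e / c) * x n) := by
          rw [mul_left_comm, ← Real.exp_add]
          ring_nf

lemma tendsto_measure_nhds_one_of_real_compl {Ω : ℕ → Type*} [∀ n, MeasurableSpace (Ω n)]
    {μ : ∀ n, Measure (Ω n)} [∀ n, IsProbabilityMeasure (μ n)] {A : ∀ n, Set (Ω n)}
    (h : Tendsto (fun n => (μ n).real (A n)ᶜ) atTop (nhds 0)) :
    Tendsto (fun n => μ n (A n)) atTop (nhds 1) := by
  have hreal : Tendsto (fun n => (μ n).real (A n)) atTop (nhds 1) := by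
    refine tendsto_of_tendsto_of_tendsto_of_le_of_le (by simpa using tendsto_const_nhds.sub h)
      tendsto_const_nhds (fun n => ?_) fun n => measureReal_le_one
    rw [sub_le_iff_le_add]
    calc (1 : ℝ) = (μ n).real (A n ∪ (A n)ᶜ) := by simp
      _ ≤ _ := measureReal_union_le _ _
  simpa using ENNReal.tendsto_ofReal hreal

lemma tendsto_birthMeasure_real_smallCocycleEvent (hjk : j < k) (d : ℕ) {c : ℝ}
    (hc : (j + 1 : ℝ) * (k - j)! < c * s) {p : ℕ → ℝ}
    (hp : ∀ᶠ n : ℕ in atTop, c * Real.log n ≤ p n * n ^ (k - j)) :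
    Tendsto (fun n => (birthMeasure n).real (smallCocycleEvent k j n s d (p n))) atTop
      (nhds 0) := by
  have hcs : 0 < c * s := lt_trans (by positivity) hc
  have hc0 : 0 < c := pos_of_mul_pos_left hcs s.cast_nonneg
  have hs : 0 < s := Nat.cast_pos.1 (pos_of_mul_pos_right hcs hc0.le)
  have hchoose : Tendsto
      (fun n : ℕ => s * (((n - d * (j + 1)).choose (k - j) : ℝ) / n ^ (k - j))) atTop
      (nhds (s * (1 / (k - j)!))) := (tendsto_choose_sub_div_pow _ _).const_mul _
  have hβ : ((j + 1 : ℕ) : ℝ) < c * (s * (1 / (k - j)!)) := by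
    rw [← mul_assoc, mul_one_div, lt_div_iff₀ (by positivity)]
    exact_mod_cast hc
  have hp0 : ∀ᶠ n : ℕ in atTop, 0 ≤ p n := by
    filter_upwards [hp, eventually_gt_atTop 0] with n hpn hn
    refine nonneg_of_mul_nonneg_left (le_trans ?_ hpn) (by positivity : (0 : ℝ) < n ^ (k - j))
    have := Real.log_natCast_nonneg n
    positivity
  refine squeeze_zero' (Eventually.of_forall fun n => measureReal_nonneg)
    (hp0.mono fun n => birthMeasure_real_smallCocycleEvent_le hjk hs) ?_
  refine Finset.sum_const_zero (s := Finset.range d) (M := ℝ) ▸ tendsto_finsetSum _ fun m _ => ?_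
  refine mul_zero (_ : ℝ) ▸ Tendsto.const_mul _ ?_
  refine (tendsto_pow_mul_pow_mul_exp_neg (m := m + 1) hc0 hp hchoose hβ).congr' ?_
  filter_upwards [eventually_gt_atTop 0] with n hn
  have hcancel : p n * n ^ (k - j) * (s * (((n - d * (j + 1)).choose (k - j) : ℝ) / n ^ (k - j))) =
      p n * (s * (n - d * (j + 1)).choose (k - j)) := by
    field_simp
  rw [hcancel]

lemma pjThreshold_mul_pow {n : ℕ} (hn : 0 < n) :
    pjThreshold k j n * n ^ (k - j) =
      ((j + 1) * Real.log n + Real.log (Real.log n)) * (k - j)! / (k - j + 1 : ℕ) := by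
  unfold pjThreshold
  field_simp

lemma exists_mul_log_le_of_tendsto_div_pjThreshold (hs : k - j + 1 < s) {p : ℕ → ℝ}
    (hp : Tendsto (fun n : ℕ => p n / pjThreshold k j n) atTop (nhds 1)) :
    ∃ c : ℝ, (j + 1 : ℝ) * (k - j)! < c * s ∧
      ∀ᶠ n : ℕ in atTop, c * Real.log n ≤ p n * n ^ (k - j) := by
  have hs' : ((k - j + 1 : ℕ) : ℝ) / s < 1 := by
    rw [div_lt_one (by exact_mod_cast Nat.zero_lt_of_lt hs)]
    exact_mod_cast hs
  obtain ⟨θ, hθs, hθ⟩ := exists_between hs'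
  have hθ0 : 0 < θ := hθs.trans_le' (by positivity)
  refine ⟨θ * ((j + 1) * (k - j)! / (k - j + 1 : ℕ)), ?_, ?_⟩
  · rw [div_lt_iff₀ (by exact_mod_cast Nat.zero_lt_of_lt hs)] at hθs
    rw [mul_right_comm, mul_div_assoc', lt_div_iff₀ (by positivity), mul_comm]
    gcongr
  have hlog : Tendsto (fun n : ℕ => Real.log n) atTop atTop :=
    Real.tendsto_log_atTop.comp tendsto_natCast_atTop_atTop
  filter_upwards [hp.eventually (lt_mem_nhds hθ), hlog.eventually_ge_atTop 1,
    eventually_gt_atTop 0] with n hpn hlogn hn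
  have hthreshold : (j + 1) * (k - j)! / (k - j + 1 : ℕ) * Real.log n ≤
      pjThreshold k j n * n ^ (k - j) := by
    rw [pjThreshold_mul_pow hn, div_mul_eq_mul_div, mul_right_comm]
    gcongr
    exact le_add_of_nonneg_right (Real.log_nonneg hlogn)
  have hpos : 0 < pjThreshold k j n :=
    pos_of_mul_pos_left (lt_of_lt_of_le (by positivity) hthreshold) (by positivity)
  calc θ * ((j + 1) * (k - j)! / (k - j + 1 : ℕ)) * Real.log n
      ≤ θ * (pjThreshold k j n * n ^ (k - j)) := by
        rw [mul_assoc]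
        gcongr
    _ = θ * pjThreshold k j n * n ^ (k - j) := (mul_assoc _ _ _).symm
    _ ≤ p n * n ^ (k - j) := by
        gcongr
        exact ((lt_div_iff₀ hpos).1 hpn).le

end Asymptotics

open scoped Nat in
theorem statement17_general {k j s : ℕ} (hjk : j < k) (d : ℕ) {c : ℝ}
    (hc : (j + 1 : ℝ) * (k - j)! < c * s) {p : ℕ → ℝ}
    (hp : ∀ᶠ n : ℕ in atTop, c * Real.log n ≤ p n * n ^ (k - j)) :
    Tendsto (fun n : ℕ => birthMeasure n {t : Finset (Fin n) → ℝ |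
      ∀ f : Cochain (complexAt k n t (p n)) j,
        f ∈ cocycles (complexAt k n t (p n)) j →
          ¬ (Traversable (complexAt k n t (p n)) k (cochainSupport f) ∧
            s ≤ (cochainSupport f).ncard ∧ (cochainSupport f).ncard ≤ d)})
      atTop (nhds 1) := by
  refine tendsto_measure_nhds_one_of_real_compl
    ((tendsto_birthMeasure_real_smallCocycleEvent hjk d hc hp).congr fun n => ?_)
  congr 1
  ext t
  simp only [smallCocycleEvent, Set.mem_ofPred_eq, Set.mem_compl_iff, not_forall, not_not,
    exists_prop]

/-- Lemma 5.4: for `p = (1+o(1))·p_j` and any constant `d ≥ k-j+2`, whp there is no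
`j`-cocycle in `G_p` with traversable support of size `s` for any `k-j+2 ≤ s ≤ d`. -/
theorem statement17 (k j : ℕ) (hk : 2 ≤ k) (hj : 1 ≤ j) (hjk : j < k)
    (p : ℕ → ℝ) (hp : Tendsto (fun n : ℕ => p n / pjThreshold k j n) atTop (nhds 1))
    (d : ℕ) (hd : k - j + 2 ≤ d) :
    Tendsto (fun n : ℕ => birthMeasure n {t : Finset (Fin n) → ℝ |
      ∀ f : Cochain (complexAt k n t (p n)) j,
        f ∈ cocycles (complexAt k n t (p n)) j →
          ¬ (Traversable (complexAt k n t (p n)) k (cochainSupport f) ∧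
            k - j + 2 ≤ (cochainSupport f).ncard ∧ (cochainSupport f).ncard ≤ d)})
      atTop (nhds 1) := by
  obtain ⟨c, hc, hcp⟩ := exists_mul_log_le_of_tendsto_div_pjThreshold (Nat.lt_succ_self _) hp
  exact statement17_general hjk d hc hcp

end RSC
end
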